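/- Let A be a differential graded Poisson algebra over a field k. Then the category DGP(A) of left differential graded Poisson modules over A is isomorphic to the category DG(A^e) of left differential graded modules over the differential graded algebra A^e; the isomorphism is given on objects by the mutually inverse assignments m_a·x = ax, h_a·x = {a,x}_M (resp. a∗x = m_a x, {a,x}_M = h_a x) and is the identity on underlying maps of morphisms. -/

import Mathlib

open scoped TensorProduct

noncomputable section

namespace DGPaper

universe u

/-- A differential graded Lie algebra structure on a `k`-vector space `V`. -/
structure DGLAOn (k : Type u) [Field k] (V : Type u) [AddCommGroup V] [Module k V] where
  gr : ℤ → Submodule k V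
  decomp : DirectSum.Decomposition gr
  br : V →ₗ[k] V →ₗ[k] V
  br_mem : ∀ {i j : ℤ} {a b : V}, a ∈ gr i → b ∈ gr j → br a b ∈ gr (i + j)
  br_antisymm : ∀ {i j : ℤ} {a b : V}, a ∈ gr i → b ∈ gr j →
    br a b = -(((-1 : k) ^ (i * j)) • br b a)
  br_jacobi : ∀ {i j l : ℤ} {a b c : V}, a ∈ gr i → b ∈ gr j → c ∈ gr l →
    br a (br b c) = br (br a b) c + ((-1 : k) ^ (i * j)) • br b (br a c)
  d : V →ₗ[k] V
  d_mem : ∀ {i : ℤ} {a : V}, a ∈ gr i → d a ∈ gr (i + 1)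
  d_sq : ∀ a : V, d (d a) = 0
  d_br : ∀ {i j : ℤ} {a b : V}, a ∈ gr i → b ∈ gr j →
    d (br a b) = br (d a) b + ((-1 : k) ^ i) • br a (d b)

/-- A differential graded (associative, unital) algebra structure on a `k`-vector space `N`. -/
structure DGAOn (k : Type u) [Field k] (N : Type u) [AddCommGroup N] [Module k N] where
  gr : ℤ → Submodule k N
  decomp : DirectSum.Decomposition gr
  mul : N →ₗ[k] N →ₗ[k] N
  one : N
  one_mem : one ∈ gr 0
  mul_mem : ∀ {i j : ℤ} {a b : N}, a ∈ gr i → b ∈ gr j → mul a b ∈ gr (i + j)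
  mul_assoc : ∀ a b c : N, mul (mul a b) c = mul a (mul b c)
  one_mul : ∀ a : N, mul one a = a
  mul_one : ∀ a : N, mul a one = a
  d : N →ₗ[k] N
  d_mem : ∀ {i : ℤ} {a : N}, a ∈ gr i → d a ∈ gr (i + 1)
  d_sq : ∀ a : N, d (d a) = 0
  d_mul : ∀ {i j : ℤ} {a b : N}, a ∈ gr i → b ∈ gr j →
    d (mul a b) = mul (d a) b + ((-1 : k) ^ i) • mul a (d b)

/-- A differential graded Poisson algebra structure on a `k`-vector space `M`. -/
structure DGPAOn (k : Type u) [Field k] (M : Type u) [AddCommGroup M] [Module k M] where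
  gr : ℤ → Submodule k M
  decomp : DirectSum.Decomposition gr
  mul : M →ₗ[k] M →ₗ[k] M
  one : M
  one_mem : one ∈ gr 0
  mul_mem : ∀ {i j : ℤ} {a b : M}, a ∈ gr i → b ∈ gr j → mul a b ∈ gr (i + j)
  mul_assoc : ∀ a b c : M, mul (mul a b) c = mul a (mul b c)
  one_mul : ∀ a : M, mul one a = a
  mul_one : ∀ a : M, mul a one = a
  mul_comm : ∀ {i j : ℤ} {a b : M}, a ∈ gr i → b ∈ gr j →
    mul a b = ((-1 : k) ^ (i * j)) • mul b a
  br : M →ₗ[k] M →ₗ[k] M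
  br_mem : ∀ {i j : ℤ} {a b : M}, a ∈ gr i → b ∈ gr j → br a b ∈ gr (i + j)
  br_antisymm : ∀ {i j : ℤ} {a b : M}, a ∈ gr i → b ∈ gr j →
    br a b = -(((-1 : k) ^ (i * j)) • br b a)
  br_jacobi : ∀ {i j l : ℤ} {a b c : M}, a ∈ gr i → b ∈ gr j → c ∈ gr l →
    br a (br b c) = br (br a b) c + ((-1 : k) ^ (i * j)) • br b (br a c)
  br_deriv : ∀ {i j l : ℤ} {a b c : M}, a ∈ gr i → b ∈ gr j → c ∈ gr l →
    br a (mul b c) = mul (br a b) c + ((-1 : k) ^ (i * j)) • mul b (br a c)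
  d : M →ₗ[k] M
  d_mem : ∀ {i : ℤ} {a : M}, a ∈ gr i → d a ∈ gr (i + 1)
  d_sq : ∀ a : M, d (d a) = 0
  d_br : ∀ {i j : ℤ} {a b : M}, a ∈ gr i → b ∈ gr j →
    d (br a b) = br (d a) b + ((-1 : k) ^ i) • br a (d b)
  d_mul : ∀ {i j : ℤ} {a b : M}, a ∈ gr i → b ∈ gr j →
    d (mul a b) = mul (d a) b + ((-1 : k) ^ i) • mul a (d b)

section Defs

variable {k : Type u} [Field k]

/-- The differential graded Lie algebra underlying a differential graded Poisson algebra. -/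
def DGPAOn.toLie {M : Type u} [AddCommGroup M] [Module k M] (P : DGPAOn k M) :
    DGLAOn k M where
  gr := P.gr
  decomp := P.decomp
  br := P.br
  br_mem := P.br_mem
  br_antisymm := P.br_antisymm
  br_jacobi := P.br_jacobi
  d := P.d
  d_mem := P.d_mem
  d_sq := P.d_sq
  d_br := P.d_br

section Maps

variable {M N : Type u} [AddCommGroup M] [Module k M] [AddCommGroup N] [Module k N]

/-- A morphism of differential graded algebras (degree-0, multiplicative, unital,
commuting with the differentials). -/
def IsDGAHom (E : DGAOn k M) (F : DGAOn k N) (f : M →ₗ[k] N) : Prop :=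
  (∀ {n : ℤ} {x : M}, x ∈ E.gr n → f x ∈ F.gr n) ∧
  (∀ x y : M, f (E.mul x y) = F.mul (f x) (f y)) ∧
  f E.one = F.one ∧
  ∀ x : M, f (E.d x) = F.d (f x)

/-- A morphism of differential graded Poisson algebras. -/
def IsDGPAHom (P : DGPAOn k M) (Q : DGPAOn k N) (f : M →ₗ[k] N) : Prop :=
  (∀ {n : ℤ} {x : M}, x ∈ P.gr n → f x ∈ Q.gr n) ∧
  (∀ x y : M, f (P.mul x y) = Q.mul (f x) (f y)) ∧
  f P.one = Q.one ∧
  (∀ x : M, f (P.d x) = Q.d (f x)) ∧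
  ∀ x y : M, f (P.br x y) = Q.br (f x) (f y)

end Maps

section Tensor

variable {A B : Type u} [AddCommGroup A] [Module k A] [AddCommGroup B] [Module k B]

/-- `R` is the tensor product differential graded Poisson algebra structure on `A ⊗[k] B`
induced by `P` and `Q`. -/
def IsTensorDGPA (P : DGPAOn k A) (Q : DGPAOn k B) (R : DGPAOn k (A ⊗[k] B)) : Prop :=
  (∀ n : ℤ, R.gr n = Submodule.span k {z : A ⊗[k] B |
      ∃ (i j : ℤ) (a : A) (b : B), i + j = n ∧ a ∈ P.gr i ∧ b ∈ Q.gr j ∧ z = a ⊗ₜ[k] b}) ∧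
  R.one = P.one ⊗ₜ[k] Q.one ∧
  (∀ {i j i' j' : ℤ} {a a' : A} {b b' : B},
      a ∈ P.gr i → b ∈ Q.gr j → a' ∈ P.gr i' → b' ∈ Q.gr j' →
    R.mul (a ⊗ₜ[k] b) (a' ⊗ₜ[k] b') = ((-1 : k) ^ (i' * j)) • (P.mul a a' ⊗ₜ[k] Q.mul b b')) ∧
  (∀ {i j : ℤ} {a : A} {b : B}, a ∈ P.gr i → b ∈ Q.gr j →
    R.d (a ⊗ₜ[k] b) = P.d a ⊗ₜ[k] b + ((-1 : k) ^ i) • (a ⊗ₜ[k] Q.d b)) ∧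
  (∀ {i j i' j' : ℤ} {a a' : A} {b b' : B},
      a ∈ P.gr i → b ∈ Q.gr j → a' ∈ P.gr i' → b' ∈ Q.gr j' →
    R.br (a ⊗ₜ[k] b) (a' ⊗ₜ[k] b') =
      ((-1 : k) ^ (i' * j)) • (P.br a a' ⊗ₜ[k] Q.mul b b' + P.mul a a' ⊗ₜ[k] Q.br b b'))

/-- `G` is the tensor product differential graded algebra structure on `A ⊗[k] B`
induced by `E` and `F` (with the Koszul sign rule). -/
def IsTensorDGA (E : DGAOn k A) (F : DGAOn k B) (G : DGAOn k (A ⊗[k] B)) : Prop :=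
  (∀ n : ℤ, G.gr n = Submodule.span k {z : A ⊗[k] B |
      ∃ (i j : ℤ) (x : A) (y : B), i + j = n ∧ x ∈ E.gr i ∧ y ∈ F.gr j ∧ z = x ⊗ₜ[k] y}) ∧
  G.one = E.one ⊗ₜ[k] F.one ∧
  (∀ {i j i' j' : ℤ} {x x' : A} {y y' : B},
      x ∈ E.gr i → y ∈ F.gr j → x' ∈ E.gr i' → y' ∈ F.gr j' →
    G.mul (x ⊗ₜ[k] y) (x' ⊗ₜ[k] y') = ((-1 : k) ^ (i' * j)) • (E.mul x x' ⊗ₜ[k] F.mul y y')) ∧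
  (∀ {i j : ℤ} {x : A} {y : B}, x ∈ E.gr i → y ∈ F.gr j →
    G.d (x ⊗ₜ[k] y) = E.d x ⊗ₜ[k] y + ((-1 : k) ^ i) • (x ⊗ₜ[k] F.d y))

end Tensor

section Env

variable {M : Type u} [AddCommGroup M] [Module k M]

/-- The defining relations of the universal enveloping algebra `A^e` of a differential
graded Poisson algebra, imposed on the tensor algebra of `M × M`; the first copy of `M`
gives the generators `m_a`, the second copy the generators `h_a`. -/
inductive EnvRel (P : DGPAOn k M) :
    TensorAlgebra k (M × M) → TensorAlgebra k (M × M) → Prop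
  | relone : EnvRel P (TensorAlgebra.ι k ((P.one, 0) : M × M)) 1
  | relmul (a b : M) :
      EnvRel P (TensorAlgebra.ι k ((P.mul a b, 0) : M × M))
        (TensorAlgebra.ι k ((a, 0) : M × M) * TensorAlgebra.ι k ((b, 0) : M × M))
  | relhmul {i j : ℤ} {a b : M} (ha : a ∈ P.gr i) (hb : b ∈ P.gr j) :
      EnvRel P (TensorAlgebra.ι k ((0, P.mul a b) : M × M))
        (TensorAlgebra.ι k ((a, 0) : M × M) * TensorAlgebra.ι k ((0, b) : M × M) +
          ((-1 : k) ^ (i * j)) •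
            (TensorAlgebra.ι k ((b, 0) : M × M) * TensorAlgebra.ι k ((0, a) : M × M)))
  | relmbr {i j : ℤ} {a b : M} (ha : a ∈ P.gr i) (hb : b ∈ P.gr j) :
      EnvRel P (TensorAlgebra.ι k ((P.br a b, 0) : M × M))
        (TensorAlgebra.ι k ((0, a) : M × M) * TensorAlgebra.ι k ((b, 0) : M × M) -
          ((-1 : k) ^ (i * j)) •
            (TensorAlgebra.ι k ((b, 0) : M × M) * TensorAlgebra.ι k ((0, a) : M × M)))
  | relhbr {i j : ℤ} {a b : M} (ha : a ∈ P.gr i) (hb : b ∈ P.gr j) :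
      EnvRel P (TensorAlgebra.ι k ((0, P.br a b) : M × M))
        (TensorAlgebra.ι k ((0, a) : M × M) * TensorAlgebra.ι k ((0, b) : M × M) -
          ((-1 : k) ^ (i * j)) •
            (TensorAlgebra.ι k ((0, b) : M × M) * TensorAlgebra.ι k ((0, a) : M × M)))

/-- The universal enveloping algebra `A^e` of a differential graded Poisson algebra,
as a quotient of the tensor algebra on two copies of `A`. -/
abbrev Env (P : DGPAOn k M) : Type u := RingQuot (EnvRel P)

/-- The generators `m_a` of `A^e`. -/
def mgen (P : DGPAOn k M) : M →ₗ[k] Env P :=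
  (RingQuot.mkAlgHom k (EnvRel P)).toLinearMap ∘ₗ
    ((TensorAlgebra.ι k : (M × M) →ₗ[k] TensorAlgebra k (M × M)) ∘ₗ LinearMap.inl k M M)

/-- The generators `h_a` of `A^e`. -/
def hgen (P : DGPAOn k M) : M →ₗ[k] Env P :=
  (RingQuot.mkAlgHom k (EnvRel P)).toLinearMap ∘ₗ
    ((TensorAlgebra.ι k : (M × M) →ₗ[k] TensorAlgebra k (M × M)) ∘ₗ LinearMap.inr k M M)

/-- `E` is the differential graded algebra structure on `A^e`, with the ring
multiplication of `A^e`, grading `|m_a| = |h_a| = |a|` and differential determined by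
`∂(m_a) = m_{d a}`, `∂(h_a) = h_{d a}` and the graded Leibniz rule. -/
def IsEnvDGA (P : DGPAOn k M) (E : DGAOn k (Env P)) : Prop :=
  (∀ x y : Env P, E.mul x y = x * y) ∧
  E.one = 1 ∧
  (∀ {i : ℤ} {a : M}, a ∈ P.gr i → mgen P a ∈ E.gr i) ∧
  (∀ {i : ℤ} {a : M}, a ∈ P.gr i → hgen P a ∈ E.gr i) ∧
  (∀ a : M, E.d (mgen P a) = mgen P (P.d a)) ∧
  (∀ a : M, E.d (hgen P a) = hgen P (P.d a))

end Env

section Lie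

variable {V : Type u} [AddCommGroup V] [Module k V]

/-- The defining relations of the universal enveloping algebra of a differential graded
Lie algebra. -/
inductive LieRel (L : DGLAOn k V) : TensorAlgebra k V → TensorAlgebra k V → Prop
  | rel {i j : ℤ} {a b : V} (ha : a ∈ L.gr i) (hb : b ∈ L.gr j) :
      LieRel L
        (TensorAlgebra.ι k a * TensorAlgebra.ι k b -
          ((-1 : k) ^ (i * j)) • (TensorAlgebra.ι k b * TensorAlgebra.ι k a))
        (TensorAlgebra.ι k (L.br a b))

/-- The universal enveloping algebra `U(L)` of a differential graded Lie algebra `L`. -/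
abbrev ULie (L : DGLAOn k V) : Type u := RingQuot (LieRel L)

/-- The canonical map `L → U(L)`. -/
def uGen (L : DGLAOn k V) : V →ₗ[k] ULie L :=
  (RingQuot.mkAlgHom k (LieRel L)).toLinearMap ∘ₗ TensorAlgebra.ι k

/-- `E` is the differential graded algebra structure of `U(L)`. -/
def IsULieDGA (L : DGLAOn k V) (E : DGAOn k (ULie L)) : Prop :=
  (∀ x y : ULie L, E.mul x y = x * y) ∧
  E.one = 1 ∧
  (∀ {i : ℤ} {a : V}, a ∈ L.gr i → uGen L a ∈ E.gr i) ∧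
  (∀ a : V, E.d (uGen L a) = uGen L (L.d a))

/-- The graded-symmetry relations defining the graded symmetric algebra of `L`. -/
inductive SymRel (L : DGLAOn k V) : TensorAlgebra k V → TensorAlgebra k V → Prop
  | rel {i j : ℤ} {a b : V} (ha : a ∈ L.gr i) (hb : b ∈ L.gr j) :
      SymRel L (TensorAlgebra.ι k a * TensorAlgebra.ι k b)
        (((-1 : k) ^ (i * j)) • (TensorAlgebra.ι k b * TensorAlgebra.ι k a))

/-- The graded symmetric algebra `𝕊L` of a differential graded Lie algebra `L`. -/
abbrev SymAlg (L : DGLAOn k V) : Type u := RingQuot (SymRel L)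

/-- The canonical map `L → 𝕊L`. -/
def sGen (L : DGLAOn k V) : V →ₗ[k] SymAlg L :=
  (RingQuot.mkAlgHom k (SymRel L)).toLinearMap ∘ₗ TensorAlgebra.ι k

/-- `R` is the differential graded Poisson algebra structure on `𝕊L` with differential
extending `d` and bracket extending the Lie bracket of `L` as a graded biderivation. -/
def IsSymDGPA (L : DGLAOn k V) (R : DGPAOn k (SymAlg L)) : Prop :=
  (∀ x y : SymAlg L, R.mul x y = x * y) ∧
  R.one = 1 ∧
  (∀ {i : ℤ} {a : V}, a ∈ L.gr i → sGen L a ∈ R.gr i) ∧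
  (∀ a : V, R.d (sGen L a) = sGen L (L.d a)) ∧
  (∀ a b : V, R.br (sGen L a) (sGen L b) = sGen L (L.br a b))

/-- `S` is the graded semidirect product differential graded Lie algebra `L ⋊ L`. -/
def IsSemidirect (L : DGLAOn k V) (S : DGLAOn k (V × V)) : Prop :=
  (∀ n : ℤ, S.gr n = (L.gr n).prod (L.gr n)) ∧
  (∀ z : V × V, S.d z = (L.d z.1, L.d z.2)) ∧
  (∀ {i j : ℤ} {x₁ x₂ y₁ y₂ : V}, x₁ ∈ L.gr i → x₂ ∈ L.gr i → y₁ ∈ L.gr j → y₂ ∈ L.gr j →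
    S.br (x₁, x₂) (y₁, y₂) =
      (L.br x₂ y₁ - ((-1 : k) ^ (i * j)) • L.br y₂ x₁, L.br x₂ y₂))

end Lie

section Smash

variable {M : Type u} [AddCommGroup M] [Module k M]

/-- The generators `1#(ab) - a#b - (-1)^{|a||b|} b#a` of the ideal defining `A^E`
inside the smash product `A # U(A)`. -/
def smashGens (P : DGPAOn k M) : Set (M ⊗[k] ULie P.toLie) :=
  {z | ∃ (i j : ℤ) (a b : M), a ∈ P.gr i ∧ b ∈ P.gr j ∧
    z = P.one ⊗ₜ[k] uGen P.toLie (P.mul a b) - a ⊗ₜ[k] uGen P.toLie b -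
        ((-1 : k) ^ (i * j)) • (b ⊗ₜ[k] uGen P.toLie a)}

/-- The two-sided ideal generated by a set `T` in a differential graded algebra `S`. -/
def idealGen {N : Type u} [AddCommGroup N] [Module k N] (S : DGAOn k N) (T : Set N) :
    Submodule k N :=
  sInf {I : Submodule k N | T ⊆ I ∧ ∀ x ∈ I, ∀ y : N, S.mul x y ∈ I ∧ S.mul y x ∈ I}

/-- `S` is the smash product differential graded algebra `A # U(A)`. -/
def IsSmash (P : DGPAOn k M) (EU : DGAOn k (ULie P.toLie))
    (S : DGAOn k (M ⊗[k] ULie P.toLie)) : Prop :=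
  S.one = P.one ⊗ₜ[k] (1 : ULie P.toLie) ∧
  (∀ a b : M, S.mul (a ⊗ₜ[k] (1 : ULie P.toLie)) (b ⊗ₜ[k] (1 : ULie P.toLie)) =
      P.mul a b ⊗ₜ[k] (1 : ULie P.toLie)) ∧
  (∀ u v : ULie P.toLie, S.mul (P.one ⊗ₜ[k] u) (P.one ⊗ₜ[k] v) = P.one ⊗ₜ[k] (u * v)) ∧
  (∀ (a : M) (u : ULie P.toLie), S.mul (a ⊗ₜ[k] (1 : ULie P.toLie)) (P.one ⊗ₜ[k] u) =
      a ⊗ₜ[k] u) ∧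
  (∀ {i j : ℤ} {c b : M}, c ∈ P.gr i → b ∈ P.gr j →
    S.mul (P.one ⊗ₜ[k] uGen P.toLie c) (b ⊗ₜ[k] (1 : ULie P.toLie)) =
      P.br c b ⊗ₜ[k] (1 : ULie P.toLie) + ((-1 : k) ^ (i * j)) • (b ⊗ₜ[k] uGen P.toLie c)) ∧
  (∀ {i j : ℤ} {a : M} {u : ULie P.toLie}, a ∈ P.gr i → u ∈ EU.gr j →
      a ⊗ₜ[k] u ∈ S.gr (i + j)) ∧
  (∀ {i : ℤ} {a : M}, a ∈ P.gr i → ∀ u : ULie P.toLie,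
    S.d (a ⊗ₜ[k] u) = P.d a ⊗ₜ[k] u + ((-1 : k) ^ i) • (a ⊗ₜ[k] EU.d u))

/-- `R` is the quotient differential graded algebra structure of `S` by the ideal `I`. -/
def IsQuotDGA {N : Type u} [AddCommGroup N] [Module k N] (S : DGAOn k N)
    (I : Submodule k N) (R : DGAOn k (N ⧸ I)) : Prop :=
  (∀ n : ℤ, R.gr n = Submodule.map I.mkQ (S.gr n)) ∧
  R.one = I.mkQ S.one ∧
  (∀ x y : N, R.mul (I.mkQ x) (I.mkQ y) = I.mkQ (S.mul x y)) ∧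
  (∀ x : N, R.d (I.mkQ x) = I.mkQ (S.d x))

end Smash

section Op

variable {M N : Type u} [AddCommGroup M] [Module k M] [AddCommGroup N] [Module k N]

/-- `P'` is the opposite differential graded Poisson algebra of `P` (the product is
unchanged by graded commutativity, the bracket is negated). -/
def IsOpDGPA (P P' : DGPAOn k M) : Prop :=
  P'.gr = P.gr ∧ (∀ x y : M, P'.mul x y = P.mul x y) ∧ P'.one = P.one ∧ P'.d = P.d ∧
  (∀ x y : M, P'.br x y = - P.br x y)

/-- `E'` is the opposite differential graded algebra of `E` (with the Koszul sign). -/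
def IsOpDGA (E E' : DGAOn k N) : Prop :=
  E'.gr = E.gr ∧ E'.one = E.one ∧ E'.d = E.d ∧
  (∀ {i j : ℤ} {x y : N}, x ∈ E.gr i → y ∈ E.gr j →
    E'.mul x y = ((-1 : k) ^ (i * j)) • E.mul y x)

end Op

section UEnv

variable {M N : Type u} [AddCommGroup M] [Module k M] [AddCommGroup N] [Module k N]

/-- A pair `(f, g)` where `f : A → D` is a differential graded algebra map and
`g : A → D_L` is a differential graded Lie algebra map (into the graded commutator Lie
structure of `D`), satisfying the two compatibility conditions of the universal property
of the universal enveloping algebra of a differential graded Poisson algebra. -/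
def UEPair (P : DGPAOn k M) (D : DGAOn k N) (f g : M →ₗ[k] N) : Prop :=
  (∀ {n : ℤ} {x : M}, x ∈ P.gr n → f x ∈ D.gr n) ∧
  (∀ {n : ℤ} {x : M}, x ∈ P.gr n → g x ∈ D.gr n) ∧
  (∀ a b : M, f (P.mul a b) = D.mul (f a) (f b)) ∧
  f P.one = D.one ∧
  (∀ a : M, f (P.d a) = D.d (f a)) ∧
  (∀ a : M, g (P.d a) = D.d (g a)) ∧
  (∀ {i j : ℤ} {a b : M}, a ∈ P.gr i → b ∈ P.gr j →
    g (P.br a b) = D.mul (g a) (g b) - ((-1 : k) ^ (i * j)) • D.mul (g b) (g a)) ∧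
  (∀ {i j : ℤ} {a b : M}, a ∈ P.gr i → b ∈ P.gr j →
    f (P.br a b) = D.mul (g a) (f b) - ((-1 : k) ^ (i * j)) • D.mul (f b) (g a)) ∧
  (∀ {i j : ℤ} {a b : M}, a ∈ P.gr i → b ∈ P.gr j →
    g (P.mul a b) = D.mul (f a) (g b) + ((-1 : k) ^ (i * j)) • D.mul (f b) (g a))

/-- `(E, α, β)` is a universal enveloping algebra of the differential graded Poisson
algebra `P`. -/
def IsUEnv (P : DGPAOn k M) (E : DGAOn k N) (α β : M →ₗ[k] N) : Prop :=
  UEPair P E α β ∧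
  ∀ (D' : Type u) [AddCommGroup D'] [Module k D'] (D : DGAOn k D') (f g : M →ₗ[k] D'),
    UEPair P D f g →
    ∃! φ : N →ₗ[k] D',
      IsDGAHom E D φ ∧ (∀ a : M, φ (α a) = f a) ∧ (∀ a : M, φ (β a) = g a)

end UEnv

section IdealsQuotients

variable {M : Type u} [AddCommGroup M] [Module k M]

/-- `B` is a differential graded Poisson ideal of `P`. -/
def IsDGPIdeal (P : DGPAOn k M) (B : Submodule k M) : Prop :=
  (B = ⨆ n : ℤ, B ⊓ P.gr n) ∧
  (∀ x ∈ B, P.d x ∈ B) ∧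
  (∀ x ∈ B, ∀ a : M, P.mul x a ∈ B) ∧
  (∀ x ∈ B, ∀ a : M, P.mul a x ∈ B) ∧
  (∀ x ∈ B, ∀ a : M, P.br a x ∈ B)

/-- `B` is a differential graded Poisson subalgebra of `P`. -/
def IsDGPSubalg (P : DGPAOn k M) (B : Submodule k M) : Prop :=
  (B = ⨆ n : ℤ, B ⊓ P.gr n) ∧ P.one ∈ B ∧
  (∀ x ∈ B, ∀ y ∈ B, P.mul x y ∈ B) ∧
  (∀ x ∈ B, P.d x ∈ B) ∧
  (∀ x ∈ B, ∀ y ∈ B, P.br x y ∈ B)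

/-- `R` is the quotient differential graded Poisson algebra structure on `M ⧸ B`. -/
def IsQuotDGPA (P : DGPAOn k M) (B : Submodule k M) (R : DGPAOn k (M ⧸ B)) : Prop :=
  (∀ n : ℤ, R.gr n = Submodule.map B.mkQ (P.gr n)) ∧
  R.one = B.mkQ P.one ∧
  (∀ x y : M, R.mul (B.mkQ x) (B.mkQ y) = B.mkQ (P.mul x y)) ∧
  (∀ x : M, R.d (B.mkQ x) = B.mkQ (P.d x)) ∧
  (∀ x y : M, R.br (B.mkQ x) (B.mkQ y) = B.mkQ (P.br x y))

/-- `S` is the differential graded Poisson algebra structure induced on a differential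
graded Poisson subalgebra `B` of `P`. -/
def IsSubDGPA (P : DGPAOn k M) (B : Submodule k M) (S : DGPAOn k B) : Prop :=
  (∀ n : ℤ, S.gr n = Submodule.comap B.subtype (P.gr n)) ∧
  ((S.one : M) = P.one) ∧
  (∀ x y : B, (S.mul x y : M) = P.mul (x : M) (y : M)) ∧
  (∀ x : B, (S.d x : M) = P.d (x : M)) ∧
  (∀ x y : B, (S.br x y : M) = P.br (x : M) (y : M))

/-- The cocycles `ker d` of a differential graded Poisson algebra. -/
def Cocycles (P : DGPAOn k M) : Submodule k M := LinearMap.ker P.d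

/-- The coboundaries `im d`, viewed inside the cocycles. -/
def CobIn (P : DGPAOn k M) : Submodule k (Cocycles P) :=
  Submodule.comap (Cocycles P).subtype (LinearMap.range P.d)

/-- The cohomology `H(A) = ker d / im d` of a differential graded Poisson algebra. -/
abbrev Cohom (P : DGPAOn k M) : Type u := Cocycles P ⧸ CobIn P

/-- The class map `ker d → H(A)`. -/
def cohCls (P : DGPAOn k M) : Cocycles P →ₗ[k] Cohom P := (CobIn P).mkQ

/-- `R` is the graded Poisson algebra structure on the cohomology of `P` (a differential
graded Poisson algebra structure with zero differential, with the induced grading,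
product and bracket). -/
def IsCohomDGPA (P : DGPAOn k M) (R : DGPAOn k (Cohom P)) : Prop :=
  R.d = 0 ∧
  (∀ n : ℤ, R.gr n =
    Submodule.map (cohCls P) (Submodule.comap (Cocycles P).subtype (P.gr n))) ∧
  (∀ h : P.one ∈ Cocycles P, R.one = cohCls P ⟨P.one, h⟩) ∧
  (∀ (a b : Cocycles P) (h : P.mul (a : M) (b : M) ∈ Cocycles P),
    R.mul (cohCls P a) (cohCls P b) = cohCls P ⟨P.mul (a : M) (b : M), h⟩) ∧
  (∀ (a b : Cocycles P) (h : P.br (a : M) (b : M) ∈ Cocycles P),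
    R.br (cohCls P a) (cohCls P b) = cohCls P ⟨P.br (a : M) (b : M), h⟩)

end IdealsQuotients

end Defs

section ModuleDefs

variable {k : Type u} [Field k]

/-- A left differential graded module structure on `X` over the differential graded
algebra `E`. -/
structure DGModOn {N : Type u} [AddCommGroup N] [Module k N] (E : DGAOn k N)
    (X : Type u) [AddCommGroup X] [Module k X] where
  grm : ℤ → Submodule k X
  decomp : DirectSum.Decomposition grm
  act : N →ₗ[k] X →ₗ[k] X
  act_one : ∀ x : X, act E.one x = x
  act_mul : ∀ (r s : N) (x : X), act (E.mul r s) x = act r (act s x)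
  act_mem : ∀ {i j : ℤ} {r : N} {x : X}, r ∈ E.gr i → x ∈ grm j → act r x ∈ grm (i + j)
  dm : X →ₗ[k] X
  dm_mem : ∀ {i : ℤ} {x : X}, x ∈ grm i → dm x ∈ grm (i + 1)
  dm_sq : ∀ x : X, dm (dm x) = 0
  dm_act : ∀ {i : ℤ} {r : N}, r ∈ E.gr i → ∀ x : X,
    dm (act r x) = act (E.d r) x + ((-1 : k) ^ i) • act r (dm x)

/-- A left differential graded Poisson module structure on `X` over the differential
graded Poisson algebra `P`. -/
structure DGPModOn {M : Type u} [AddCommGroup M] [Module k M] (P : DGPAOn k M)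
    (X : Type u) [AddCommGroup X] [Module k X] where
  grm : ℤ → Submodule k X
  decomp : DirectSum.Decomposition grm
  act : M →ₗ[k] X →ₗ[k] X
  act_one : ∀ x : X, act P.one x = x
  act_mul : ∀ (a b : M) (x : X), act (P.mul a b) x = act a (act b x)
  act_mem : ∀ {i j : ℤ} {a : M} {x : X}, a ∈ P.gr i → x ∈ grm j → act a x ∈ grm (i + j)
  dm : X →ₗ[k] X
  dm_mem : ∀ {i : ℤ} {x : X}, x ∈ grm i → dm x ∈ grm (i + 1)
  dm_sq : ∀ x : X, dm (dm x) = 0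
  dm_act : ∀ {i : ℤ} {a : M}, a ∈ P.gr i → ∀ x : X,
    dm (act a x) = act (P.d a) x + ((-1 : k) ^ i) • act a (dm x)
  bact : M →ₗ[k] X →ₗ[k] X
  bact_mem : ∀ {i j : ℤ} {a : M} {x : X}, a ∈ P.gr i → x ∈ grm j → bact a x ∈ grm (i + j)
  bact_amod : ∀ {i j : ℤ} {a b : M}, a ∈ P.gr i → b ∈ P.gr j → ∀ x : X,
    bact a (act b x) = act (P.br a b) x + ((-1 : k) ^ (i * j)) • act b (bact a x)
  bact_mulact : ∀ {i j : ℤ} {a b : M}, a ∈ P.gr i → b ∈ P.gr j → ∀ x : X,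
    bact (P.mul a b) x = act a (bact b x) + ((-1 : k) ^ (i * j)) • act b (bact a x)
  bact_jacobi : ∀ {i j : ℤ} {a b : M}, a ∈ P.gr i → b ∈ P.gr j → ∀ x : X,
    bact a (bact b x) = bact (P.br a b) x + ((-1 : k) ^ (i * j)) • bact b (bact a x)
  dm_bact : ∀ {i : ℤ} {a : M}, a ∈ P.gr i → ∀ x : X,
    dm (bact a x) = bact (P.d a) x + ((-1 : k) ^ i) • bact a (dm x)

/-- A morphism of left differential graded modules. -/
def IsDGModHom {N X Y : Type u} [AddCommGroup N] [Module k N]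
    [AddCommGroup X] [Module k X] [AddCommGroup Y] [Module k Y]
    {E : DGAOn k N} (W : DGModOn E X) (W' : DGModOn E Y) (f : X →ₗ[k] Y) : Prop :=
  (∀ {n : ℤ} {x : X}, x ∈ W.grm n → f x ∈ W'.grm n) ∧
  (∀ x : X, f (W.dm x) = W'.dm (f x)) ∧
  (∀ (r : N) (x : X), f (W.act r x) = W'.act r (f x))

/-- A morphism of left differential graded Poisson modules. -/
def IsDGPModHom {M X Y : Type u} [AddCommGroup M] [Module k M]
    [AddCommGroup X] [Module k X] [AddCommGroup Y] [Module k Y]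
    {P : DGPAOn k M} (V : DGPModOn P X) (V' : DGPModOn P Y) (f : X →ₗ[k] Y) : Prop :=
  (∀ {n : ℤ} {x : X}, x ∈ V.grm n → f x ∈ V'.grm n) ∧
  (∀ x : X, f (V.dm x) = V'.dm (f x)) ∧
  (∀ (a : M) (x : X), f (V.act a x) = V'.act a (f x)) ∧
  (∀ (a : M) (x : X), f (V.bact a x) = V'.bact a (f x))

/-- The correspondence between a differential graded Poisson module structure over `P`
and a differential graded module structure over `A^e` on the same space. -/
def ModCorr {M X : Type u} [AddCommGroup M] [Module k M] [AddCommGroup X] [Module k X]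
    {P : DGPAOn k M} {E : DGAOn k (Env P)}
    (V : DGPModOn P X) (W : DGModOn E X) : Prop :=
  W.grm = V.grm ∧ W.dm = V.dm ∧
  (∀ (a : M) (x : X), W.act (mgen P a) x = V.act a x) ∧
  (∀ (a : M) (x : X), W.act (hgen P a) x = V.bact a x)

end ModuleDefs

/-!
The relations defining `A^e` say exactly that a representation `A^e → End X` is a pair of linear
maps `A → End X`, the images of `a ↦ m_a` and `a ↦ h_a`, satisfying the identities of a Poisson
module. Conversely, for the representation attached to a Poisson module, the elements of degree `i`
which shift the degree of `X` by `i` and satisfy the Leibniz rule against `∂` are closed under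
products and contain the generators. A family of graded pieces, closed under products and
containing homogeneous generators, is the whole grading, so the representation is a differential
graded module. Linear maps commuting with the generators commute with all of `A^e`, which settles
uniqueness of the action and the comparison of morphisms.
-/

section GradedAlgebra

variable {ι R A : Type*} [AddMonoid ι]

theorem iSup_eq_top_of_adjoin_eq_top [CommSemiring R] [Semiring A] [Algebra R A]
    (S : ι → Submodule R A) [SetLike.GradedMonoid S] {s : Set A} (hs : Algebra.adjoin R s = ⊤)
    (hsS : s ⊆ (⨆ i, S i : Submodule R A)) :
    ⨆ i, S i = ⊤ := by
  classical
  rw [Submodule.iSup_eq_toSubmodule_range] at hsS ⊢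
  have hrange : (DirectSum.coeAlgHom S).range = ⊤ := top_le_iff.1 (hs ▸ Algebra.adjoin_le hsS)
  rw [hrange, Algebra.top_toSubmodule]

theorem grading_le_of_adjoin_eq_top [CommRing R] [Ring A] [Algebra R A]
    {gr : ι → Submodule R A} [SetLike.GradedMonoid gr] (hgr : iSupIndep gr)
    {S : ι → Submodule R A} {s : Set A} (hs : Algebra.adjoin R s = ⊤)
    (mem : s ⊆ (⨆ i, gr i ⊓ S i : Submodule R A)) (one : 1 ∈ S 0)
    (mul : ∀ {i j : ι} {a b : A}, a ∈ gr i → b ∈ gr j → a ∈ S i → b ∈ S j → a * b ∈ S (i + j)) :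
    gr ≤ S := by
  have : SetLike.GradedMonoid fun i => gr i ⊓ S i :=
    { one_mem := ⟨SetLike.GradedOne.one_mem, one⟩
      mul_mem := fun _ _ _ _ ha hb =>
        ⟨SetLike.GradedMul.mul_mem ha.1 hb.1, mul ha.1 hb.1 ha.2 hb.2⟩ }
  have htop := iSup_eq_top_of_adjoin_eq_top _ hs mem
  have heq := (hgr.le_iff_eq_of_iSup_eq_top htop).1 fun _ => inf_le_left
  exact fun i => inf_eq_left.1 (congrFun heq i)

end GradedAlgebra

section LinearMaps

variable {ι R X Y : Type*} [CommSemiring R] [AddCommMonoid X] [Module R X]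
  [AddCommMonoid Y] [Module R Y]

theorem range_le_iSup_of_iSup_eq_top {gr : ι → Submodule R X} (hgr : ⨆ i, gr i = ⊤)
    {S : ι → Submodule R Y} {f : X →ₗ[R] Y} (hf : ∀ {i x}, x ∈ gr i → f x ∈ S i) :
    LinearMap.range f ≤ ⨆ i, S i := by
  rw [LinearMap.range_eq_map, ← hgr, Submodule.map_iSup]
  exact iSup_mono fun _ => Submodule.map_le_iff_le_comap.2 fun _ => hf

/-- The endomorphisms of degree `i` of a module with a family of graded pieces `gr`. -/
def homogeneousEnd [Add ι] (gr : ι → Submodule R X) (i : ι) : Submodule R (Module.End R X) :=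
  ⨅ j, (gr j).compatibleMaps (gr (i + j))

theorem mem_homogeneousEnd [Add ι] {gr : ι → Submodule R X} {i : ι} {T : Module.End R X} :
    T ∈ homogeneousEnd gr i ↔ ∀ {j x}, x ∈ gr j → T x ∈ gr (i + j) := by
  simp only [homogeneousEnd, Submodule.mem_iInf]
  rfl

instance homogeneousEnd.gradedMonoid [AddMonoid ι] (gr : ι → Submodule R X) :
    SetLike.GradedMonoid (homogeneousEnd gr) where
  one_mem := mem_homogeneousEnd.2 fun hx => by simpa using hx
  mul_mem i j S T hS hT := mem_homogeneousEnd.2 fun hx => by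
    rw [add_assoc]
    exact mem_homogeneousEnd.1 hS (mem_homogeneousEnd.1 hT hx)

theorem comp_eq_comp_of_adjoin_eq_top {A : Type*} [Semiring A] [Algebra R A]
    {ρ : A →ₐ[R] Module.End R X} {σ : A →ₐ[R] Module.End R Y} {f : X →ₗ[R] Y} {s : Set A}
    (hs : Algebra.adjoin R s = ⊤) (h : ∀ a ∈ s, f ∘ₗ ρ a = σ a ∘ₗ f) (a : A) :
    f ∘ₗ ρ a = σ a ∘ₗ f := by
  have ha : a ∈ Algebra.adjoin R s := hs ▸ Algebra.mem_top
  induction ha using Algebra.adjoin_induction with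
  | mem a ha => exact h a ha
  | algebraMap c => ext x; simp [Module.algebraMap_end_apply]
  | add a b _ _ iha ihb => rw [map_add, map_add, LinearMap.comp_add, LinearMap.add_comp, iha, ihb]
  | mul a b _ _ iha ihb =>
    rw [map_mul, map_mul, Module.End.mul_eq_comp, Module.End.mul_eq_comp, ← LinearMap.comp_assoc,
      iha, LinearMap.comp_assoc, ihb, LinearMap.comp_assoc]

end LinearMaps

section Leibniz

variable {k A B : Type*} [Field k] [Ring A] [Algebra k A] [Ring B] [Algebra k B]
  (ρ : A →ₐ[k] B) (d : A →ₗ[k] A) (δ : B)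

/-- The elements `a` for which the graded commutator of `δ` with `ρ a` is `ρ (d a)`, where `a` is
counted as having degree `i`. -/
def leibnizLocus (i : ℤ) : Submodule k A :=
  LinearMap.eqLocus (LinearMap.mulLeft k δ ∘ₗ ρ.toLinearMap)
    (ρ.toLinearMap ∘ₗ d + (-1 : k) ^ i • LinearMap.mulRight k δ ∘ₗ ρ.toLinearMap)

variable {ρ d δ}

theorem mem_leibnizLocus {i : ℤ} {a : A} :
    a ∈ leibnizLocus ρ d δ i ↔ δ * ρ a = ρ (d a) + (-1 : k) ^ i • (ρ a * δ) :=
  Iff.rfl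

theorem one_mem_leibnizLocus (hd : d 1 = 0) : 1 ∈ leibnizLocus ρ d δ 0 := by
  simp [mem_leibnizLocus, hd]

theorem mul_mem_leibnizLocus {i j : ℤ} {a b : A}
    (hd : d (a * b) = d a * b + (-1 : k) ^ i • (a * d b))
    (ha : a ∈ leibnizLocus ρ d δ i) (hb : b ∈ leibnizLocus ρ d δ j) :
    a * b ∈ leibnizLocus ρ d δ (i + j) := by
  rw [mem_leibnizLocus] at ha hb ⊢
  calc δ * ρ (a * b)
      = ρ (d a) * ρ b + (-1 : k) ^ i • (ρ a * (δ * ρ b)) := by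
        rw [map_mul, ← mul_assoc, ha, add_mul, smul_mul_assoc, mul_assoc]
    _ = ρ (d (a * b)) + (-1 : k) ^ (i + j) • (ρ (a * b) * δ) := by
        rw [hb, hd, zpow_add₀ (neg_ne_zero.2 one_ne_zero)]
        simp only [map_add, map_mul, map_smul, mul_add, smul_add, mul_smul_comm, smul_smul,
          mul_assoc, add_assoc]

end Leibniz

theorem DGAOn.d_one {k N : Type u} [Field k] [AddCommGroup N] [Module k N] (E : DGAOn k N) :
    E.d E.one = 0 := by
  simpa [E.one_mul, E.mul_one] using E.d_mul E.one_mem E.one_mem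

section EnvelopingAlgebra

variable {k : Type u} [Field k] {M : Type u} [AddCommGroup M] [Module k M] {P : DGPAOn k M}

/-- The relations of `A^e` for the images `f a` of `m_a` and `g a` of `h_a` in an algebra. This is
the algebraic part of `UEPair`; the target carries no grading because `End X` is in general not the
direct sum of its homogeneous pieces. -/
structure IsPoissonPair {R : Type*} [Ring R] [Algebra k R] (P : DGPAOn k M) (f g : M →ₗ[k] R) :
    Prop where
  left_one : f P.one = 1
  left_mul : ∀ a b : M, f (P.mul a b) = f a * f b
  right_mul : ∀ {i j : ℤ} {a b : M}, a ∈ P.gr i → b ∈ P.gr j →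
    g (P.mul a b) = f a * g b + (-1 : k) ^ (i * j) • (f b * g a)
  left_br : ∀ {i j : ℤ} {a b : M}, a ∈ P.gr i → b ∈ P.gr j →
    f (P.br a b) = g a * f b - (-1 : k) ^ (i * j) • (f b * g a)
  right_br : ∀ {i j : ℤ} {a b : M}, a ∈ P.gr i → b ∈ P.gr j →
    g (P.br a b) = g a * g b - (-1 : k) ^ (i * j) • (g b * g a)

namespace IsPoissonPair

variable {R S : Type*} [Ring R] [Algebra k R] [Ring S] [Algebra k S] {f g : M →ₗ[k] R}

theorem map (h : IsPoissonPair P f g) (φ : R →ₐ[k] S) :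
    IsPoissonPair P (φ.toLinearMap ∘ₗ f) (φ.toLinearMap ∘ₗ g) where
  left_one := by simp [h.left_one]
  left_mul a b := by simp [h.left_mul]
  right_mul ha hb := by simp [h.right_mul ha hb]
  left_br ha hb := by simp [h.left_br ha hb]
  right_br ha hb := by simp [h.right_br ha hb]

theorem lift_eq_of_envRel (h : IsPoissonPair P f g) {s t : TensorAlgebra k (M × M)}
    (hst : EnvRel P s t) :
    TensorAlgebra.lift k (f.coprod g) s = TensorAlgebra.lift k (f.coprod g) t := by
  cases hst with
  | relone => simpa using h.left_one
  | relmul a b => simpa using h.left_mul a b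
  | relhmul ha hb => simpa using h.right_mul ha hb
  | relmbr ha hb => simpa using h.left_br ha hb
  | relhbr ha hb => simpa using h.right_br ha hb

/-- The algebra map out of `A^e` with `m_a ↦ f a` and `h_a ↦ g a`. -/
def lift (h : IsPoissonPair P f g) : Env P →ₐ[k] R :=
  RingQuot.liftAlgHom k ⟨TensorAlgebra.lift k (f.coprod g), fun _ _ => h.lift_eq_of_envRel⟩

theorem lift_mgen (h : IsPoissonPair P f g) (a : M) : h.lift (mgen P a) = f a := by
  simp [lift, mgen]

theorem lift_hgen (h : IsPoissonPair P f g) (a : M) : h.lift (hgen P a) = g a := by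
  simp [lift, hgen]

end IsPoissonPair

theorem isPoissonPair_mgen_hgen (P : DGPAOn k M) : IsPoissonPair P (mgen P) (hgen P) where
  left_one := by
    simpa [mgen] using RingQuot.mkAlgHom_rel k (EnvRel.relone (P := P))
  left_mul a b := by
    simpa [mgen] using RingQuot.mkAlgHom_rel k (EnvRel.relmul (P := P) a b)
  right_mul ha hb := by
    simpa [mgen, hgen] using RingQuot.mkAlgHom_rel k (EnvRel.relhmul ha hb)
  left_br ha hb := by
    simpa [mgen, hgen] using RingQuot.mkAlgHom_rel k (EnvRel.relmbr ha hb)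
  right_br ha hb := by
    simpa [mgen, hgen] using RingQuot.mkAlgHom_rel k (EnvRel.relhbr ha hb)

theorem adjoin_range_mgen_union_range_hgen (P : DGPAOn k M) :
    Algebra.adjoin k (Set.range (mgen P) ∪ Set.range (hgen P)) = ⊤ := by
  have hι (z : M × M) : RingQuot.mkAlgHom k (EnvRel P) (TensorAlgebra.ι k z) =
      mgen P z.1 + hgen P z.2 := by
    simp [mgen, hgen, ← map_add]
  rw [← top_le_iff, ← (AlgHom.range_eq_top _).2 (RingQuot.mkAlgHom_surjective k (EnvRel P)),
    ← Algebra.map_top, ← TensorAlgebra.adjoin_range_ι, AlgHom.map_adjoin]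
  refine Algebra.adjoin_le ?_
  rintro _ ⟨_, ⟨z, rfl⟩, rfl⟩
  exact hι z ▸ add_mem (Algebra.subset_adjoin (.inl ⟨z.1, rfl⟩))
    (Algebra.subset_adjoin (.inr ⟨z.2, rfl⟩))

namespace IsEnvDGA

variable {E : DGAOn k (Env P)}

theorem mul_eq (hE : IsEnvDGA P E) (r s : Env P) : E.mul r s = r * s := hE.1 r s

theorem one_eq (hE : IsEnvDGA P E) : E.one = 1 := hE.2.1

theorem mgen_mem (hE : IsEnvDGA P E) {i : ℤ} {a : M} (ha : a ∈ P.gr i) : mgen P a ∈ E.gr i :=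
  hE.2.2.1 ha

theorem hgen_mem (hE : IsEnvDGA P E) {i : ℤ} {a : M} (ha : a ∈ P.gr i) : hgen P a ∈ E.gr i :=
  hE.2.2.2.1 ha

theorem d_mgen (hE : IsEnvDGA P E) (a : M) : E.d (mgen P a) = mgen P (P.d a) := hE.2.2.2.2.1 a

theorem d_hgen (hE : IsEnvDGA P E) (a : M) : E.d (hgen P a) = hgen P (P.d a) := hE.2.2.2.2.2 a

theorem d_one (hE : IsEnvDGA P E) : E.d 1 = 0 := hE.one_eq ▸ E.d_one

theorem d_mul (hE : IsEnvDGA P E) {i j : ℤ} {r s : Env P} (hr : r ∈ E.gr i) (hs : s ∈ E.gr j) :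
    E.d (r * s) = E.d r * s + (-1 : k) ^ i • (r * E.d s) := by
  simpa only [hE.mul_eq] using E.d_mul hr hs

theorem gradedMonoid (hE : IsEnvDGA P E) : SetLike.GradedMonoid E.gr where
  one_mem := hE.one_eq ▸ E.one_mem
  mul_mem _ _ _ _ hr hs := hE.mul_eq _ _ ▸ E.mul_mem hr hs

theorem gr_le_of_generators (hE : IsEnvDGA P E) {S : ℤ → Submodule k (Env P)} (one : 1 ∈ S 0)
    (mul : ∀ {i j : ℤ} {r s : Env P}, r ∈ E.gr i → s ∈ E.gr j → r ∈ S i → s ∈ S j →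
      r * s ∈ S (i + j))
    (mgen_mem : ∀ {i : ℤ} {a : M}, a ∈ P.gr i → mgen P a ∈ S i)
    (hgen_mem : ∀ {i : ℤ} {a : M}, a ∈ P.gr i → hgen P a ∈ S i) :
    E.gr ≤ S := by
  have := hE.gradedMonoid
  have hgrE : iSupIndep E.gr :=
    have := E.decomp
    (DirectSum.Decomposition.isInternal E.gr).submodule_iSupIndep
  have hgrP : ⨆ i, P.gr i = ⊤ :=
    have := P.decomp
    (DirectSum.Decomposition.isInternal P.gr).submodule_iSup_eq_top
  refine grading_le_of_adjoin_eq_top hgrE (adjoin_range_mgen_union_range_hgen P)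
    (Set.union_subset ?_ ?_) one mul
  · exact range_le_iSup_of_iSup_eq_top hgrP fun ha => ⟨hE.mgen_mem ha, mgen_mem ha⟩
  · exact range_le_iSup_of_iSup_eq_top hgrP fun ha => ⟨hE.hgen_mem ha, hgen_mem ha⟩

end IsEnvDGA

end EnvelopingAlgebra

section Modules

variable {k : Type u} [Field k] {M : Type u} [AddCommGroup M] [Module k M] {P : DGPAOn k M}
  {E : DGAOn k (Env P)} {X : Type u} [AddCommGroup X] [Module k X]

namespace DGPModOn

@[ext]
theorem ext {V V' : DGPModOn P X} (grm : V.grm = V'.grm) (act : V.act = V'.act)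
    (dm : V.dm = V'.dm) (bact : V.bact = V'.bact) : V = V' := by
  cases V
  cases V'
  cases grm
  cases act
  cases dm
  cases bact
  congr 1
  exact Subsingleton.elim _ _

theorem isPoissonPair (V : DGPModOn P X) :
    IsPoissonPair (R := Module.End k X) P V.act V.bact where
  left_one := LinearMap.ext V.act_one
  left_mul a b := LinearMap.ext (V.act_mul a b)
  right_mul ha hb := LinearMap.ext (V.bact_mulact ha hb)
  left_br ha hb := LinearMap.ext fun x => eq_sub_of_add_eq (V.bact_amod ha hb x).symm
  right_br ha hb := LinearMap.ext fun x => eq_sub_of_add_eq (V.bact_jacobi ha hb x).symm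

/-- The action of `A^e` on a Poisson module, `m_a·x = ax` and `h_a·x = {a,x}`. -/
def rep (V : DGPModOn P X) : Env P →ₐ[k] Module.End k X := V.isPoissonPair.lift

theorem rep_mgen (V : DGPModOn P X) (a : M) : V.rep (mgen P a) = V.act a :=
  V.isPoissonPair.lift_mgen a

theorem rep_hgen (V : DGPModOn P X) (a : M) : V.rep (hgen P a) = V.bact a :=
  V.isPoissonPair.lift_hgen a

theorem rep_mem_homogeneousEnd (V : DGPModOn P X) (hE : IsEnvDGA P E) {i : ℤ} {r : Env P}
    (hr : r ∈ E.gr i) : V.rep r ∈ homogeneousEnd V.grm i := by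
  suffices h : E.gr ≤ fun i => (homogeneousEnd V.grm i).comap V.rep.toLinearMap from h i hr
  refine hE.gr_le_of_generators ?_ (fun _ _ hr hs => ?_) (fun ha => ?_) fun ha => ?_
  · simpa using SetLike.GradedOne.one_mem (A := homogeneousEnd V.grm)
  · simpa using SetLike.GradedMul.mul_mem (A := homogeneousEnd V.grm) hr hs
  · exact mem_homogeneousEnd.2 fun hx => V.rep_mgen _ ▸ V.act_mem ha hx
  · exact mem_homogeneousEnd.2 fun hx => V.rep_hgen _ ▸ V.bact_mem ha hx

theorem mem_leibnizLocus_rep (V : DGPModOn P X) (hE : IsEnvDGA P E) {i : ℤ} {r : Env P}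
    (hr : r ∈ E.gr i) : r ∈ leibnizLocus V.rep E.d V.dm i := by
  refine hE.gr_le_of_generators (one_mem_leibnizLocus hE.d_one)
    (fun hr hs => mul_mem_leibnizLocus (hE.d_mul hr hs)) (fun ha => ?_) (fun ha => ?_) i hr
  · rw [mem_leibnizLocus, hE.d_mgen, rep_mgen, rep_mgen]
    exact LinearMap.ext (V.dm_act ha)
  · rw [mem_leibnizLocus, hE.d_hgen, rep_hgen, rep_hgen]
    exact LinearMap.ext (V.dm_bact ha)

/-- The differential graded `A^e`-module attached to a differential graded Poisson module. -/
def toDGMod (V : DGPModOn P X) (hE : IsEnvDGA P E) : DGModOn E X where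
  grm := V.grm
  decomp := V.decomp
  act := V.rep.toLinearMap
  act_one x := by simp [hE.one_eq]
  act_mul r s x := by simp [hE.mul_eq]
  act_mem hr hx := mem_homogeneousEnd.1 (V.rep_mem_homogeneousEnd hE hr) hx
  dm := V.dm
  dm_mem := V.dm_mem
  dm_sq := V.dm_sq
  dm_act hr x := LinearMap.congr_fun (mem_leibnizLocus.1 (V.mem_leibnizLocus_rep hE hr)) x

theorem modCorr_toDGMod (V : DGPModOn P X) (hE : IsEnvDGA P E) : ModCorr V (V.toDGMod hE) :=
  ⟨rfl, rfl, fun a => LinearMap.congr_fun (V.rep_mgen a),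
    fun a => LinearMap.congr_fun (V.rep_hgen a)⟩

end DGPModOn

namespace DGModOn

@[ext]
theorem ext {N : Type u} [AddCommGroup N] [Module k N] {F : DGAOn k N} {W W' : DGModOn F X}
    (grm : W.grm = W'.grm) (act : W.act = W'.act) (dm : W.dm = W'.dm) : W = W' := by
  cases W
  cases W'
  cases grm
  cases act
  cases dm
  congr 1
  exact Subsingleton.elim _ _

/-- The action on a differential graded `A^e`-module as a map of algebras. -/
def rep (W : DGModOn E X) (hE : IsEnvDGA P E) : Env P →ₐ[k] Module.End k X :=
  AlgHom.ofLinearMap W.act (LinearMap.ext fun x => hE.one_eq ▸ W.act_one x)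
    fun r s => LinearMap.ext fun x => hE.mul_eq r s ▸ W.act_mul r s x

theorem forall_map_act_iff {Y : Type u} [AddCommGroup Y] [Module k Y] (W : DGModOn E X)
    (W' : DGModOn E Y) (hE : IsEnvDGA P E) (f : X →ₗ[k] Y) :
    (∀ r x, f (W.act r x) = W'.act r (f x)) ↔
      (∀ a x, f (W.act (mgen P a) x) = W'.act (mgen P a) (f x)) ∧
        ∀ a x, f (W.act (hgen P a) x) = W'.act (hgen P a) (f x) := by
  refine ⟨fun h => ⟨fun a => h _, fun a => h _⟩, fun ⟨hm, hh⟩ r x => ?_⟩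
  refine LinearMap.congr_fun (comp_eq_comp_of_adjoin_eq_top (ρ := W.rep hE) (σ := W'.rep hE)
    (adjoin_range_mgen_union_range_hgen P) ?_ r) x
  rintro _ (⟨a, rfl⟩ | ⟨a, rfl⟩)
  · exact LinearMap.ext (hm a)
  · exact LinearMap.ext (hh a)

/-- The differential graded Poisson module attached to a differential graded `A^e`-module, with
`ax = m_a·x` and `{a,x} = h_a·x`. -/
def toDGPMod (W : DGModOn E X) (hE : IsEnvDGA P E) : DGPModOn P X :=
  have pair := (isPoissonPair_mgen_hgen P).map (W.rep hE)
  { grm := W.grm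
    decomp := W.decomp
    act := W.act ∘ₗ mgen P
    act_one := LinearMap.congr_fun pair.left_one
    act_mul := fun a b => LinearMap.congr_fun (pair.left_mul a b)
    act_mem := fun ha => W.act_mem (hE.mgen_mem ha)
    dm := W.dm
    dm_mem := W.dm_mem
    dm_sq := W.dm_sq
    dm_act := fun {_ a} ha => by simpa [hE.d_mgen a] using W.dm_act (hE.mgen_mem ha)
    bact := W.act ∘ₗ hgen P
    bact_mem := fun ha => W.act_mem (hE.hgen_mem ha)
    bact_amod := fun ha hb =>
      LinearMap.congr_fun (eq_sub_iff_add_eq.1 (pair.left_br ha hb)).symm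
    bact_mulact := fun ha hb => LinearMap.congr_fun (pair.right_mul ha hb)
    bact_jacobi := fun ha hb =>
      LinearMap.congr_fun (eq_sub_iff_add_eq.1 (pair.right_br ha hb)).symm
    dm_bact := fun {_ a} ha => by simpa [hE.d_hgen a] using W.dm_act (hE.hgen_mem ha) }

theorem isDGPModHom_toDGPMod_iff {Y : Type u} [AddCommGroup Y] [Module k Y] (W : DGModOn E X)
    (W' : DGModOn E Y) (hE : IsEnvDGA P E) (f : X →ₗ[k] Y) :
    IsDGPModHom (W.toDGPMod hE) (W'.toDGPMod hE) f ↔ IsDGModHom W W' f :=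
  and_congr Iff.rfl (and_congr Iff.rfl (forall_map_act_iff W W' hE f).symm)

end DGModOn

theorem modCorr_iff_eq_toDGPMod (hE : IsEnvDGA P E) {V : DGPModOn P X} {W : DGModOn E X} :
    ModCorr V W ↔ V = W.toDGPMod hE := by
  refine ⟨fun ⟨hgrm, hdm, hm, hh⟩ => ?_, ?_⟩
  · exact DGPModOn.ext hgrm.symm (LinearMap.ext₂ fun a x => (hm a x).symm) hdm.symm
      (LinearMap.ext₂ fun a x => (hh a x).symm)
  · rintro rfl
    exact ⟨rfl, rfl, fun _ _ => rfl, fun _ _ => rfl⟩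

theorem ModCorr.dgMod_unique (hE : IsEnvDGA P E) {V : DGPModOn P X} {W W' : DGModOn E X}
    (h : ModCorr V W) (h' : ModCorr V W') : W = W' := by
  obtain ⟨hgrm, hdm, hm, hh⟩ := h
  obtain ⟨hgrm', hdm', hm', hh'⟩ := h'
  have hact := (DGModOn.forall_map_act_iff W W' hE LinearMap.id).2
    ⟨fun a x => (hm a x).trans (hm' a x).symm, fun a x => (hh a x).trans (hh' a x).symm⟩
  exact DGModOn.ext (hgrm.trans hgrm'.symm) (LinearMap.ext₂ hact) (hdm.trans hdm'.symm)

end Modules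

/-- the category of left differential graded Poisson modules over `A` is
isomorphic to the category of left differential graded modules over `A^e`: the
correspondences `m_a·x = ax, h_a·x = {a,x}` and `a∗x = m_a x, {a,x} = h_a x` are
mutually inverse bijections on objects, and a linear map is a morphism of differential
graded Poisson modules iff it is a morphism of the corresponding differential graded
`A^e`-modules (the functors are the identity on underlying maps). -/
theorem stmt_12 (k : Type u) [Field k] (M : Type u) [AddCommGroup M] [Module k M]
    (P : DGPAOn k M) (E : DGAOn k (Env P)) (hE : IsEnvDGA P E) :
    (∀ (X : Type u) [AddCommGroup X] [Module k X] (V : DGPModOn P X),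
      ∃! W : DGModOn E X, ModCorr V W) ∧
    (∀ (X : Type u) [AddCommGroup X] [Module k X] (W : DGModOn E X),
      ∃! V : DGPModOn P X, ModCorr V W) ∧
    (∀ (X Y : Type u) [AddCommGroup X] [Module k X] [AddCommGroup Y] [Module k Y]
        (V : DGPModOn P X) (V' : DGPModOn P Y) (W : DGModOn E X) (W' : DGModOn E Y),
      ModCorr V W → ModCorr V' W' →
      ∀ f : X →ₗ[k] Y, IsDGPModHom V V' f ↔ IsDGModHom W W' f) := by
  refine ⟨fun X _ _ V => ?_, fun X _ _ W => ?_, fun X Y _ _ _ _ V V' W W' h h' f => ?_⟩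
  · exact ⟨V.toDGMod hE, V.modCorr_toDGMod hE,
      fun W hW => hW.dgMod_unique hE (V.modCorr_toDGMod hE)⟩
  · exact ⟨W.toDGPMod hE, (modCorr_iff_eq_toDGPMod hE).2 rfl,
      fun V => (modCorr_iff_eq_toDGPMod hE).1⟩
  · obtain rfl := (modCorr_iff_eq_toDGPMod hE).1 h
    obtain rfl := (modCorr_iff_eq_toDGPMod hE).1 h'
    exact DGModOn.isDGPModHom_toDGPMod_iff W W' hE f

end DGPaper

end
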